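/- Let ℰ_σ(x,y) = exp(−‖x−y‖/σ) be the ℓ²-norm exponential kernel on ℝ^d with parameter σ > 0, where ‖·‖ is the Euclidean norm. For 0 < σ₁ < σ₂: (a) (σ₂/σ₁) ℰ_{σ₂} − ℰ_{σ₁} is a positive semidefinite kernel on ℝ^d, and σ₂/σ₁ is the least constant λ ≥ 0 for which λℰ_{σ₂} − ℰ_{σ₁} is a positive semidefinite kernel; (b) (σ₂/σ₁)^d ℰ_{σ₁} − ℰ_{σ₂} is a positive semidefinite kernel on ℝ^d, and (σ₂/σ₁)^d is the least constant λ ≥ 0 for which λℰ_{σ₁} − ℰ_{σ₂} is a positive semidefinite kernel. -/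

import Mathlib

open scoped ComplexOrder

/-- A function `K : X × X → ℂ` is a positive semidefinite kernel if every finite
quadratic form `∑ j, ∑ k, c j * conj (c k) * K (x j) (x k)` is a nonnegative real number. -/
def IsPSDKernel {X : Type*} (K : X → X → ℂ) : Prop :=
  ∀ (n : ℕ) (x : Fin n → X) (c : Fin n → ℂ),
    0 ≤ ∑ j, ∑ k, c j * (starRingEnd ℂ) (c k) * K (x j) (x k)

/-- The `ℓ²`-norm exponential kernel `ℰ_σ(x,y) = exp(−‖x−y‖/σ)` on `ℝ^d`. -/
noncomputable def l2expK (d : ℕ) (σ : ℝ) (x y : EuclideanSpace ℝ (Fin d)) : ℂ :=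
  ((Real.exp (-‖x - y‖ / σ) : ℝ) : ℂ)

section Aux

open MeasureTheory ProbabilityTheory Filter Topology

lemma psd_integral {X α : Type*} [MeasurableSpace α] (μ : Measure α) (K : α → X → X → ℂ)
    (hint : ∀ x y, Integrable (fun t => K t x y) μ)
    (hpsd : ∀ᵐ t ∂μ, IsPSDKernel (K t)) :
    IsPSDKernel (fun x y => ∫ t, K t x y ∂μ) := by
  intro n x c
  have : ∑ j, ∑ k, c j * (starRingEnd ℂ) (c k) * (∫ t, K t (x j) (x k) ∂μ)
      = ∫ t, ∑ j, ∑ k, c j * (starRingEnd ℂ) (c k) * K t (x j) (x k) ∂μ := by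
    rw [integral_finsetSum _ (fun j _ => integrable_finsetSum _ (fun k _ => (hint _ _).const_mul _))]
    refine Finset.sum_congr rfl fun j _ => ?_
    rw [integral_finsetSum _ (fun k _ => (hint _ _).const_mul _)]
    refine Finset.sum_congr rfl fun k _ => ?_
    rw [integral_const_mul]
  rw [this]
  apply integral_nonneg_of_ae
  filter_upwards [hpsd] with t ht
  exact ht n x c

lemma psd_smul {X : Type*} {K : X → X → ℂ} (hK : IsPSDKernel K) (a : ℝ) (ha : 0 ≤ a) :
    IsPSDKernel (fun x y => (a : ℂ) * K x y) := by
  intro n x c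
  have : ∑ j, ∑ k, c j * (starRingEnd ℂ) (c k) * ((a : ℂ) * K (x j) (x k))
      = (a : ℂ) * ∑ j, ∑ k, c j * (starRingEnd ℂ) (c k) * K (x j) (x k) := by
    simp only [Finset.mul_sum]
    refine Finset.sum_congr rfl fun j _ => Finset.sum_congr rfl fun k _ => by ring
  rw [this]
  exact mul_nonneg (by exact_mod_cast ha) (hK n x c)

lemma psd_char {E : Type*} [NormedAddCommGroup E] [InnerProductSpace ℝ E] (w : E) :
    IsPSDKernel (fun x y : E => Complex.exp (Complex.I * (inner ℝ (x - y) w : ℝ))) := by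
  intro n x c
  have : ∑ j, ∑ k, c j * (starRingEnd ℂ) (c k) *
        Complex.exp (Complex.I * (inner ℝ (x j - x k) w : ℝ))
      = (∑ j, c j * Complex.exp (Complex.I * (inner ℝ (x j) w : ℝ))) *
        (starRingEnd ℂ) (∑ j, c j * Complex.exp (Complex.I * (inner ℝ (x j) w : ℝ))) := by
    rw [map_sum, Finset.sum_mul_sum]
    refine Finset.sum_congr rfl fun j _ => Finset.sum_congr rfl fun k _ => ?_
    rw [map_mul, ← Complex.exp_conj, map_mul, Complex.conj_I, Complex.conj_ofReal, inner_sub_left]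
    have : Complex.I * ((inner ℝ (x j) w - inner ℝ (x k) w : ℝ) : ℂ)
      = Complex.I * (inner ℝ (x j) w : ℝ) + (-Complex.I * (inner ℝ (x k) w : ℝ)) := by
      push_cast; ring
    rw [this, Complex.exp_add]; ring
  rw [this, Complex.mul_conj]
  exact_mod_cast Complex.normSq_nonneg _

/-- Gaussian Fourier representation -/
lemma gauss_repr (d : ℕ) (a u : ℝ) (ha : 0 < a) (hu : 0 < u) (x : EuclideanSpace ℝ (Fin d)) :
    Integrable (fun w : EuclideanSpace ℝ (Fin d) =>
      ((Real.exp (-(‖w‖ ^ 2 / (4 * (a ^ 2 * u)))) : ℝ) : ℂ) *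
        Complex.exp (Complex.I * (inner ℝ x w : ℝ))) ∧
    ∫ w : EuclideanSpace ℝ (Fin d), ((Real.exp (-(‖w‖ ^ 2 / (4 * (a ^ 2 * u)))) : ℝ) : ℂ) *
        Complex.exp (Complex.I * (inner ℝ x w : ℝ))
      = (((4 * Real.pi * u) ^ ((d : ℝ) / 2) : ℝ) : ℂ) * ((a ^ d * Real.exp (-(a ^ 2 * ‖x‖ ^ 2 * u)) : ℝ) : ℂ) := by
  have hau : 0 < a ^ 2 * u := by positivity
  set b : ℝ := 1 / (4 * (a ^ 2 * u)) with hb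
  have hb0 : 0 < b := by positivity
  have e : (fun w : EuclideanSpace ℝ (Fin d) =>
      ((Real.exp (-(‖w‖ ^ 2 / (4 * (a ^ 2 * u)))) : ℝ) : ℂ) *
        Complex.exp (Complex.I * (inner ℝ x w : ℝ))) =
      fun w => Complex.exp (-(b : ℂ) * (‖w‖ : ℂ) ^ 2 + Complex.I * (inner ℝ x w : ℝ)) := by
    funext w
    rw [Complex.exp_add]
    congr 1
    rw [Complex.ofReal_exp]
    congr 1
    rw [hb]; push_cast; ring
  rw [e]
  have hbre : 0 < (b : ℂ).re := by simpa using hb0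
  refine ⟨GaussianFourier.integrable_cexp_neg_mul_sq_norm_add hbre _ _, ?_⟩
  rw [GaussianFourier.integral_cexp_neg_mul_sq_norm_add hbre]
  have h1 : (Real.pi / b) ^ ((d : ℝ) / 2) = (4 * Real.pi * u) ^ ((d : ℝ) / 2) * a ^ d := by
    have : Real.pi / b = (4 * Real.pi * u) * a ^ 2 := by rw [hb]; field_simp
    rw [this, Real.mul_rpow (by positivity) (by positivity)]
    congr 1
    rw [← Real.rpow_natCast a 2, ← Real.rpow_mul ha.le]
    rw [← Real.rpow_natCast a d]
    congr 1
    push_cast; ring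
  have h2 : ((Real.pi : ℂ) / b) ^ ((Module.finrank ℝ (EuclideanSpace ℝ (Fin d)) : ℂ) / 2)
      = (((Real.pi / b) ^ ((d : ℝ) / 2) : ℝ) : ℂ) := by
    rw [Complex.ofReal_cpow (by positivity)]
    simp
  rw [h2, h1]
  push_cast
  rw [Complex.I_sq, mul_assoc]
  congr 3
  have : (a : ℂ) ≠ 0 := by exact_mod_cast ha.ne'
  have : (u : ℂ) ≠ 0 := by exact_mod_cast hu.ne'
  rw [hb]; push_cast
  field_simp

lemma psd_of_smul {X : Type*} {K : X → X → ℂ} (a : ℝ) (ha : 0 < a)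
    (hK : IsPSDKernel (fun x y => (a : ℂ) * K x y)) : IsPSDKernel K := by
  have := psd_smul hK a⁻¹ (by positivity)
  have h : (a : ℂ) ≠ 0 := by exact_mod_cast ha.ne'
  convert this using 3
  push_cast
  field_simp

lemma psd_gauss (d : ℕ) (u : ℝ) (hu : 0 < u) :
    IsPSDKernel (fun x y : EuclideanSpace ℝ (Fin d) =>
      ((Real.exp (-(‖x - y‖ ^ 2 * u)) : ℝ) : ℂ)) := by
  apply psd_of_smul ((4 * Real.pi * u) ^ ((d : ℝ) / 2)) (by positivity)
  have key := psd_integral (X := EuclideanSpace ℝ (Fin d)) (volume : Measure (EuclideanSpace ℝ (Fin d)))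
    (fun w x y => ((Real.exp (-(‖w‖ ^ 2 / (4 * (1 ^ 2 * u)))) : ℝ) : ℂ) *
        Complex.exp (Complex.I * (inner ℝ (x - y) w : ℝ)))
    (fun x y => (gauss_repr d 1 u one_pos hu (x - y)).1)
    (Eventually.of_forall fun w => psd_smul (psd_char w) _ (Real.exp_pos _).le)
  convert key using 3 with x y
  rw [(gauss_repr d 1 u one_pos hu (x - y)).2]
  simp

lemma psd_gauss_diff (d : ℕ) (a₁ a₂ u : ℝ) (h2 : 0 < a₂) (h : a₂ < a₁) (hu : 0 < u) :
    IsPSDKernel (fun x y : EuclideanSpace ℝ (Fin d) =>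
      ((a₁ ^ d * Real.exp (-(a₁ ^ 2 * ‖x - y‖ ^ 2 * u))
        - a₂ ^ d * Real.exp (-(a₂ ^ 2 * ‖x - y‖ ^ 2 * u)) : ℝ) : ℂ)) := by
  have h1 : 0 < a₁ := h2.trans h
  apply psd_of_smul ((4 * Real.pi * u) ^ ((d : ℝ) / 2)) (by positivity)
  have key := psd_integral (X := EuclideanSpace ℝ (Fin d)) (volume : Measure (EuclideanSpace ℝ (Fin d)))
    (fun w x y => ((Real.exp (-(‖w‖ ^ 2 / (4 * (a₁ ^ 2 * u))))
        - Real.exp (-(‖w‖ ^ 2 / (4 * (a₂ ^ 2 * u)))) : ℝ) : ℂ) *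
        Complex.exp (Complex.I * (inner ℝ (x - y) w : ℝ)))
    (fun x y => by
      have := (gauss_repr d a₁ u h1 hu (x - y)).1.sub (gauss_repr d a₂ u h2 hu (x - y)).1
      convert this using 2 with w
      simp only [Pi.sub_apply]
      push_cast; ring)
    (Eventually.of_forall fun w => psd_smul (psd_char w) _ (by
      rw [sub_nonneg]
      gcongr))
  convert key using 3 with x y
  have e := integral_sub (gauss_repr d a₁ u h1 hu (x - y)).1 (gauss_repr d a₂ u h2 hu (x - y)).1
  rw [(gauss_repr d a₁ u h1 hu (x - y)).2, (gauss_repr d a₂ u h2 hu (x - y)).2] at e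
  rw [Complex.ofReal_sub, mul_sub, ← e]
  refine integral_congr_ae (Eventually.of_forall fun w => ?_)
  simp only
  push_cast; ring

lemma sub_integrable (a b : ℝ) (ha : 0 < a) :
    IntegrableOn (fun t : ℝ => Real.exp (-(a ^ 2 * t ^ 2)) * Real.exp (-(b ^ 2 / t ^ 2))) (Set.Ioi 0) := by
  have h := (integrable_exp_neg_mul_sq (b := a ^ 2) (by positivity)).integrableOn (s := Set.Ioi (0:ℝ))
  refine Integrable.mono' h ?_ ?_
  · exact (Measurable.aestronglyMeasurable (by fun_prop))
  · refine Eventually.of_forall fun t => ?_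
    rw [Real.norm_of_nonneg (by positivity), neg_mul]
    have : Real.exp (-(b ^ 2 / t ^ 2)) ≤ 1 := by
      rw [Real.exp_le_one_iff, neg_nonpos]; positivity
    nlinarith [Real.exp_pos (-(a ^ 2 * t ^ 2))]

lemma sub_base_pos (b : ℝ) (hb : 0 < b) :
    ∫ t in Set.Ioi (0:ℝ), Real.exp (-(t ^ 2)) * Real.exp (-(b ^ 2 / t ^ 2))
      = √Real.pi / 2 * Real.exp (-(2 * b)) := by
  set f : ℝ → ℝ := fun t => Real.exp (-(t ^ 2)) * Real.exp (-(b ^ 2 / t ^ 2)) with hf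
  have hfi : IntegrableOn f (Set.Ioi 0) := by
    have := sub_integrable 1 b one_pos
    simpa [hf] using this
  -- t ↦ b / t
  have d1 : ∀ t ∈ Set.Ioi (0:ℝ), HasDerivWithinAt (fun t : ℝ => b / t) (-(b / t ^ 2)) (Set.Ioi 0) t := by
    intro t ht
    have ht' : t ≠ 0 := ne_of_gt ht
    have := ((hasDerivAt_inv ht').const_mul b).hasDerivWithinAt (s := Set.Ioi 0)
    have e : -(b / t ^ 2) = b * -(t ^ 2)⁻¹ := by field_simp
    rw [e]
    simpa only [div_eq_mul_inv] using this
  have inj1 : Set.InjOn (fun t : ℝ => b / t) (Set.Ioi 0) := by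
    intro s hs t ht h
    have hs' : s ≠ 0 := ne_of_gt hs
    have ht' : t ≠ 0 := ne_of_gt ht
    simp only at h
    field_simp at h
    exact h.symm
  have im1 : (fun t : ℝ => b / t) '' (Set.Ioi 0) = Set.Ioi 0 := by
    ext s
    constructor
    · rintro ⟨t, ht, rfl⟩
      exact div_pos hb ht
    · intro hs
      refine ⟨b / s, div_pos hb hs, ?_⟩
      have hs' : s ≠ 0 := ne_of_gt hs
      simp only
      field_simp
  have abs1 : ∀ t : ℝ, |(-(b / t ^ 2))| = b / t ^ 2 := fun t => by
    rw [abs_neg, abs_of_nonneg]; positivity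
  have c1 := integral_image_eq_integral_abs_deriv_smul measurableSet_Ioi d1 inj1 f
  have i1 := (integrableOn_image_iff_integrableOn_abs_deriv_smul measurableSet_Ioi d1 inj1 f)
  rw [im1] at c1 i1
  have i1 := i1.1 hfi
  simp only [abs1, smul_eq_mul] at c1 i1
  have fb : ∀ t ∈ Set.Ioi (0:ℝ), b / t ^ 2 * f (b / t) = b / t ^ 2 * f t := by
    intro t ht
    have ht' : t ≠ 0 := ne_of_gt ht
    congr 1
    simp only [hf]
    rw [mul_comm]
    congr 2
    · field_simp
    · field_simp
  rw [setIntegral_congr_fun measurableSet_Ioi fb] at c1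
  have i1 := i1.congr_fun fb measurableSet_Ioi
  -- t ↦ t - b / t
  have d2 : ∀ t ∈ Set.Ioi (0:ℝ), HasDerivWithinAt (fun t : ℝ => t - b / t) (1 + b / t ^ 2) (Set.Ioi 0) t := by
    intro t ht
    have := (hasDerivWithinAt_id t (Set.Ioi 0)).sub (d1 t ht)
    have e : 1 + b / t ^ 2 = 1 - -(b / t ^ 2) := by ring
    rw [e]
    exact this
  have inj2 : Set.InjOn (fun t : ℝ => t - b / t) (Set.Ioi 0) := by
    intro s hs t ht h
    have hs' : 0 < s := hs
    have ht' : 0 < t := ht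
    simp only at h
    field_simp at h
    have : (s - t) * (s * t + b) = 0 := by linarith
    rcases mul_eq_zero.1 this with h | h
    · linarith
    · have : 0 < s * t + b := by positivity
      linarith
  have im2 : (fun t : ℝ => t - b / t) '' (Set.Ioi 0) = Set.univ := by
    ext s
    simp only [Set.mem_univ, iff_true]
    have hsq : √(s ^ 2 + 4 * b) ^ 2 = s ^ 2 + 4 * b := Real.sq_sqrt (by positivity)
    have hlt : |s| < √(s ^ 2 + 4 * b) := by
      apply Real.lt_sqrt_of_sq_lt
      rw [sq_abs]; linarith
    have hpos : 0 < s + √(s ^ 2 + 4 * b) := by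
      have := neg_abs_le s
      linarith
    refine ⟨(s + √(s ^ 2 + 4 * b)) / 2, by simp only [Set.mem_Ioi]; linarith, ?_⟩
    simp only
    field_simp
    nlinarith
  have c2 := integral_image_eq_integral_abs_deriv_smul measurableSet_Ioi d2 inj2
    (fun u => Real.exp (-1 * u ^ 2))
  rw [im2, Measure.restrict_univ, integral_gaussian] at c2
  have e2 : ∀ t ∈ Set.Ioi (0:ℝ), |1 + b / t ^ 2| • Real.exp (-1 * (t - b / t) ^ 2)
      = Real.exp (2 * b) * (f t + b / t ^ 2 * f t) := by
    intro t ht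
    have ht' : t ≠ 0 := ne_of_gt ht
    rw [abs_of_nonneg (by positivity), smul_eq_mul]
    have : Real.exp (-1 * (t - b / t) ^ 2) = Real.exp (2 * b) * f t := by
      simp only [hf]
      rw [← Real.exp_add, ← Real.exp_add]
      congr 1
      field_simp
      ring
    rw [this]; ring
  rw [setIntegral_congr_fun measurableSet_Ioi e2, integral_const_mul, integral_add hfi i1, ← c1] at c2
  rw [div_one] at c2
  rw [c2, Real.exp_neg]
  have := Real.exp_pos (2 * b)
  field_simp
  ring

lemma sub_base (b : ℝ) (hb : 0 ≤ b) :
    ∫ t in Set.Ioi (0:ℝ), Real.exp (-(t ^ 2)) * Real.exp (-(b ^ 2 / t ^ 2))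
      = √Real.pi / 2 * Real.exp (-(2 * b)) := by
  rcases hb.eq_or_lt with rfl | hb
  · have := integral_gaussian_Ioi 1
    simpa using this
  · exact sub_base_pos b hb

lemma sub_scaled (a r : ℝ) (ha : 0 < a) (hr : 0 ≤ r) :
    ∫ t in Set.Ioi (0:ℝ), Real.exp (-(a ^ 2 * t ^ 2)) * Real.exp (-(r ^ 2 * (1 / (4 * t ^ 2))))
      = √Real.pi / 2 * a⁻¹ * Real.exp (-(a * r)) := by
  have h := integral_comp_mul_left_Ioi
    (fun t => Real.exp (-(t ^ 2)) * Real.exp (-((a * r / 2) ^ 2 / t ^ 2))) 0 ha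
  rw [mul_zero, sub_base _ (by positivity), smul_eq_mul] at h
  have e : a⁻¹ * (√Real.pi / 2 * Real.exp (-(2 * (a * r / 2)))) = √Real.pi / 2 * a⁻¹ * Real.exp (-(a * r)) := by
    rw [show 2 * (a * r / 2) = a * r by ring]; ring
  rw [← e, ← h]
  refine setIntegral_congr_fun measurableSet_Ioi fun t ht => ?_
  have ht' : t ≠ 0 := ne_of_gt ht
  congr 2
  · ring
  · field_simp; ring

lemma sub_scaled_int (a r : ℝ) (ha : 0 < a) :
    IntegrableOn (fun t : ℝ => Real.exp (-(a ^ 2 * t ^ 2)) * Real.exp (-(r ^ 2 * (1 / (4 * t ^ 2)))))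
      (Set.Ioi 0) := by
  have := sub_integrable a (r / 2) ha
  refine this.congr_fun (fun t ht => ?_) measurableSet_Ioi
  simp only
  congr 2
  ring

lemma psd_a (d : ℕ) (a₁ a₂ : ℝ) (h2 : 0 < a₂) (h : a₂ < a₁) :
    IsPSDKernel (fun x y : EuclideanSpace ℝ (Fin d) =>
      ((a₂⁻¹ * Real.exp (-(a₂ * ‖x - y‖)) - a₁⁻¹ * Real.exp (-(a₁ * ‖x - y‖)) : ℝ) : ℂ)) := by
  have h1 : 0 < a₁ := h2.trans h
  apply psd_of_smul (√Real.pi / 2) (by positivity)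
  have ii := fun x y : EuclideanSpace ℝ (Fin d) =>
    (sub_scaled_int a₂ ‖x - y‖ h2).sub (sub_scaled_int a₁ ‖x - y‖ h1)
  have key := psd_integral (X := EuclideanSpace ℝ (Fin d)) (volume.restrict (Set.Ioi (0:ℝ)))
    (fun t x y => ((Real.exp (-(a₂ ^ 2 * t ^ 2)) - Real.exp (-(a₁ ^ 2 * t ^ 2)) : ℝ) : ℂ) *
      ((Real.exp (-(‖x - y‖ ^ 2 * (1 / (4 * t ^ 2)))) : ℝ) : ℂ))
    (fun x y => by
      have := (ii x y).ofReal (𝕜 := ℂ)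
      convert this using 2 with t
      simp only [Pi.sub_apply, Complex.coe_algebraMap]
      push_cast; ring)
    (by
      filter_upwards [ae_restrict_mem measurableSet_Ioi] with t ht
      have ht' : 0 < t := ht
      refine psd_smul (psd_gauss d (1 / (4 * t ^ 2)) (by positivity)) _ ?_
      rw [sub_nonneg]
      gcongr)
  convert key using 3 with x y
  have e := integral_sub (sub_scaled_int a₂ ‖x - y‖ h2) (sub_scaled_int a₁ ‖x - y‖ h1)
  rw [sub_scaled _ _ h2 (norm_nonneg _), sub_scaled _ _ h1 (norm_nonneg _)] at e
  rw [← Complex.ofReal_mul, mul_sub, ← mul_assoc, ← mul_assoc, ← e, ← integral_complex_ofReal]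
  refine integral_congr_ae (Eventually.of_forall fun w => ?_)
  simp only
  push_cast; ring

lemma psd_b (d : ℕ) (a₁ a₂ : ℝ) (h2 : 0 < a₂) (h : a₂ < a₁) :
    IsPSDKernel (fun x y : EuclideanSpace ℝ (Fin d) =>
      ((a₁ ^ d * Real.exp (-(a₁ * ‖x - y‖)) - a₂ ^ d * Real.exp (-(a₂ * ‖x - y‖)) : ℝ) : ℂ)) := by
  have h1 : 0 < a₁ := h2.trans h
  apply psd_of_smul (√Real.pi / 2) (by positivity)
  have ii := fun (x y : EuclideanSpace ℝ (Fin d)) (a : ℝ) =>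
    (sub_scaled_int 1 (a * ‖x - y‖) one_pos).const_mul (a ^ d)
  have key := psd_integral (X := EuclideanSpace ℝ (Fin d)) (volume.restrict (Set.Ioi (0:ℝ)))
    (fun t x y => ((Real.exp (-(1 ^ 2 * t ^ 2)) : ℝ) : ℂ) *
      ((a₁ ^ d * Real.exp (-(a₁ ^ 2 * ‖x - y‖ ^ 2 * (1 / (4 * t ^ 2))))
        - a₂ ^ d * Real.exp (-(a₂ ^ 2 * ‖x - y‖ ^ 2 * (1 / (4 * t ^ 2)))) : ℝ) : ℂ))
    (fun x y => by
      have := ((ii x y a₁).sub (ii x y a₂)).ofReal (𝕜 := ℂ)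
      convert this using 2 with t
      simp only [Pi.sub_apply, Complex.coe_algebraMap, mul_pow]
      push_cast; ring)
    (by
      filter_upwards [ae_restrict_mem measurableSet_Ioi] with t ht
      have ht' : 0 < t := ht
      exact psd_smul (psd_gauss_diff d a₁ a₂ (1 / (4 * t ^ 2)) h2 h (by positivity)) _ (Real.exp_pos _).le)
  convert key using 3 with x y
  have e := integral_sub (ii x y a₁) (ii x y a₂)
  rw [integral_const_mul, integral_const_mul, sub_scaled _ _ one_pos (by positivity),
    sub_scaled _ _ one_pos (by positivity)] at e
  have e' : √Real.pi / 2 * (a₁ ^ d * Real.exp (-(a₁ * ‖x - y‖)) - a₂ ^ d * Real.exp (-(a₂ * ‖x - y‖)))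
     = a₁ ^ d * (√Real.pi / 2 * 1⁻¹ * Real.exp (-(1 * (a₁ * ‖x - y‖)))) -
      a₂ ^ d * (√Real.pi / 2 * 1⁻¹ * Real.exp (-(1 * (a₂ * ‖x - y‖)))) := by
    simp only [one_mul, inv_one]; ring
  rw [← Complex.ofReal_mul, e', ← e, ← integral_complex_ofReal]
  refine integral_congr_ae (Eventually.of_forall fun w => ?_)
  simp only [mul_pow]
  push_cast; ring

lemma lower_a (d : ℕ) (hd : 0 < d) (σ₁ σ₂ : ℝ) (hσ₁ : 0 < σ₁) (h₁₂ : σ₁ < σ₂) (lam : ℝ)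
    (h : IsPSDKernel (fun x y : EuclideanSpace ℝ (Fin d) =>
            (lam : ℂ) * l2expK d σ₂ x y - l2expK d σ₁ x y)) : σ₂ / σ₁ ≤ lam := by
  have h2 : 0 < σ₂ := hσ₁.trans h₁₂
  set g : ℝ → ℝ := fun r => lam * (1 - Real.exp (-r / σ₂)) - (1 - Real.exp (-r / σ₁)) with hg
  have hpos : ∀ r : ℝ, 0 < r → 0 ≤ g r := by
    intro r hr
    have := h 2 ![EuclideanSpace.single ⟨0, hd⟩ r, 0] ![1, -1]
    simp only [l2expK, Fin.sum_univ_two] at this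
    simp [abs_of_pos hr] at this
    have h3 : (0:ℂ) ≤ ((2 * g r : ℝ) : ℂ) := by
      refine this.trans_eq ?_
      simp only [hg]
      push_cast
      ring
    have h4 : 0 ≤ 2 * g r := by exact_mod_cast h3
    linarith
  have hder : HasDerivAt g (lam * (1 / σ₂) - 1 / σ₁) 0 := by
    have e : ∀ σ : ℝ, HasDerivAt (fun r : ℝ => 1 - Real.exp (-r / σ)) (1 / σ) 0 := by
      intro σ
      have := (((hasDerivAt_id (0:ℝ)).neg.div_const σ).exp).const_sub 1
      simpa [neg_div] using this
    exact ((e σ₂).const_mul lam).sub (e σ₁)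
  have ht : Tendsto (slope g 0) (𝓝[>] 0) (𝓝 (lam * (1 / σ₂) - 1 / σ₁)) :=
    (hasDerivAt_iff_tendsto_slope.1 hder).mono_left (nhdsWithin_mono _ (by
      intro x hx; exact ne_of_gt hx))
  have h0 : g 0 = 0 := by simp [hg]
  have : 0 ≤ lam * (1 / σ₂) - 1 / σ₁ := by
    refine ge_of_tendsto ht ?_
    filter_upwards [self_mem_nhdsWithin] with r hr
    rw [slope_def_field, h0, sub_zero, sub_zero]
    exact div_nonneg (hpos r hr) (le_of_lt hr)
  rw [div_le_iff₀ hσ₁]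
  field_simp at this
  linarith

lemma psd_double_integral {E : Type*} [MeasurableSpace E] (K : E → E → ℝ)
    (hm : Measurable (fun p : E × E => K p.1 p.2)) (M : ℝ) (hM : ∀ x y, |K x y| ≤ M)
    (hK : IsPSDKernel (fun x y => ((K x y : ℝ) : ℂ))) (μ : Measure E) [IsProbabilityMeasure μ] :
    0 ≤ ∫ p : E × E, K p.1 p.2 ∂(μ.prod μ) := by
  set A := ∫ p : E × E, K p.1 p.2 ∂(μ.prod μ) with hA
  have hn : ∀ n : ℕ, 0 ≤ n * M + (n * n - n) * A := by
    intro n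
    let P : Measure (Fin n → E) := Measure.pi (fun _ => μ)
    have mj : ∀ j k : Fin n, Measurable (fun x : Fin n → E => K (x j) (x k)) := fun j k =>
      hm.comp (g := fun p : E × E => K p.1 p.2) (f := fun x : Fin n → E => (x j, x k))
        ((measurable_pi_apply j).prodMk (measurable_pi_apply k))
    have hint : ∀ j k : Fin n, Integrable (fun x : Fin n → E => K (x j) (x k)) P := by
      intro j k
      refine Integrable.mono' (integrable_const M) (mj j k).aestronglyMeasurable
        (Eventually.of_forall fun x => hM _ _)
    have h0 : 0 ≤ ∫ x, ∑ j, ∑ k, K (x j) (x k) ∂P := by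
      refine integral_nonneg fun x => ?_
      have := hK n x (fun _ => 1)
      simp only [map_one, one_mul] at this
      exact_mod_cast this
    have h1 : ∫ x, ∑ j, ∑ k, K (x j) (x k) ∂P = ∑ j, ∑ k, ∫ x, K (x j) (x k) ∂P := by
      rw [integral_finsetSum _ (fun j _ => integrable_finsetSum _ (fun k _ => hint j k))]
      exact Finset.sum_congr rfl fun j _ => integral_finsetSum _ (fun k _ => hint j k)
    have h2 : ∀ j k : Fin n, ∫ x, K (x j) (x k) ∂P ≤ A + (if j = k then M - A else 0) := by
      intro j k
      split_ifs with hjk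
      · have := integral_mono (hint j k) (integrable_const M) (fun x => (abs_le.1 (hM _ _)).2)
        simpa using this
      · have hi : iIndepFun (fun (i : Fin n) (ω : Fin n → E) => ω i) P :=
          iIndepFun_pi (X := fun _ x => x) (fun i => aemeasurable_id)
        have := (indepFun_iff_map_prod_eq_prod_map_map (measurable_pi_apply j).aemeasurable
          (measurable_pi_apply k).aemeasurable).1 (hi.indepFun hjk)
        have ej : Measure.map (fun ω : Fin n → E => ω j) P = μ :=
          (measurePreserving_eval (fun _ : Fin n => μ) j).map_eq
        have ek : Measure.map (fun ω : Fin n → E => ω k) P = μ :=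
          (measurePreserving_eval (fun _ : Fin n => μ) k).map_eq
        rw [ej, ek] at this
        rw [add_zero, hA, ← this, integral_map
          ((measurable_pi_apply j).prodMk (measurable_pi_apply k)).aemeasurable
          hm.aestronglyMeasurable]
    have h3 : ∑ j : Fin n, ∑ k : Fin n, (A + (if j = k then M - A else 0))
        = n * M + (n * n - n) * A := by
      simp [Finset.sum_add_distrib]
      ring
    rw [← h3]
    exact (h0.trans_eq h1).trans (Finset.sum_le_sum fun j _ => Finset.sum_le_sum fun k _ => h2 j k)
  by_contra! hneg
  obtain ⟨n, hn'⟩ := exists_nat_gt (1 + M / (-A))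
  have hA' : 0 < -A := by linarith
  have hMA : M / (-A) * (-A) = M := div_mul_cancel₀ _ hA'.ne'
  have h4 := hn (n + 1)
  have hM0 : 0 ≤ M := by
    have := hn 1
    simpa using this
  have h5 : 0 ≤ M / (-A) := by positivity
  push_cast at h4
  have h6 : (n + 1 : ℝ) * (M + n * A) ≥ 0 := by linarith
  have h7 : M + n * A < 0 := by nlinarith
  nlinarith

lemma exp_norm_integrable (d : ℕ) (hd : 0 < d) (σ : ℝ) (hσ : 0 < σ) :
    Integrable (fun z : EuclideanSpace ℝ (Fin d) => Real.exp (-‖z‖ / σ)) ∧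
    ∫ z : EuclideanSpace ℝ (Fin d), Real.exp (-‖z‖ / σ)
      = σ ^ d * ∫ z : EuclideanSpace ℝ (Fin d), Real.exp (-‖z‖) := by
  haveI : Nonempty (Fin d) := ⟨⟨0, hd⟩⟩
  have h1 : Integrable (fun z : EuclideanSpace ℝ (Fin d) => Real.exp (-‖z‖)) := by
    refine (integrable_fun_norm_addHaar (f := fun r : ℝ => Real.exp (-r)) volume).2 ?_
    have := Real.GammaIntegral_convergent (s := d) (by exact_mod_cast hd)
    refine this.congr_fun (fun y hy => ?_) measurableSet_Ioi
    simp only [finrank_euclideanSpace, Fintype.card_fin, smul_eq_mul]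
    rw [mul_comm, ← Real.rpow_natCast, Nat.cast_sub hd, Nat.cast_one]
  have e : (fun z : EuclideanSpace ℝ (Fin d) => Real.exp (-‖z‖ / σ))
      = fun z => Real.exp (-‖σ⁻¹ • z‖) := by
    funext z
    rw [norm_smul, norm_inv, Real.norm_of_nonneg hσ.le]
    congr 1
    field_simp
  rw [e]
  refine ⟨h1.comp_smul (R := σ⁻¹) (by positivity), ?_⟩
  rw [Measure.integral_comp_smul volume (fun z : EuclideanSpace ℝ (Fin d) => Real.exp (-‖z‖))]
  simp [abs_of_pos hσ]

lemma gauss_avg {d : ℕ} (k : EuclideanSpace ℝ (Fin d) → ℝ) (hk : Continuous k)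
    (hki : Integrable k) (M : ℝ) (hM : ∀ x, |k x| ≤ M)
    (hK : IsPSDKernel (fun x y => ((k (x - y) : ℝ) : ℂ))) (t : ℝ) (ht : 0 < t) :
    0 ≤ ∫ z, k z * Real.exp (-(t / 2) * ‖z‖ ^ 2) := by
  let E := EuclideanSpace ℝ (Fin d)
  have gint : ∀ s : ℝ, 0 < s → Integrable (fun x : E => Real.exp (-s * ‖x‖ ^ 2)) := by
    intro s hs
    have := (GaussianFourier.integrable_cexp_neg_mul_sq_norm_add (b := (s : ℂ)) (V := E)
      (by simpa using hs) 0 0).re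
    refine this.congr (Eventually.of_forall fun x => ?_)
    simp only [zero_mul, add_zero]
    rw [show (-(s:ℂ) * (‖x‖ : ℂ) ^ 2) = ((-s * ‖x‖ ^ 2 : ℝ) : ℂ) by push_cast; ring, ← Complex.ofReal_exp]
    rfl
  have gpos : ∀ s : ℝ, 0 < s → 0 < ∫ x : E, Real.exp (-s * ‖x‖ ^ 2) := by
    intro s hs
    rw [GaussianFourier.integral_rexp_neg_mul_sq_norm hs]
    positivity
  set Z := ∫ x : E, Real.exp (-t * ‖x‖ ^ 2) with hZ
  have hZ0 : 0 < Z := gpos t ht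
  set ρ : E → ℝ := fun x => Z⁻¹ * Real.exp (-t * ‖x‖ ^ 2) with hρ
  have ρc : Continuous ρ := by fun_prop
  have ρ0 : ∀ x, 0 ≤ ρ x := fun x => by positivity
  have ρi : Integrable ρ := (gint t ht).const_mul _
  have ρ1 : ∫ x, ρ x = 1 := by
    rw [hρ, integral_const_mul, ← hZ]; field_simp
  have ρb : ∀ x, ρ x ≤ Z⁻¹ := by
    intro x
    have : Real.exp (-t * ‖x‖ ^ 2) ≤ 1 := by
      rw [Real.exp_le_one_iff]
      have : 0 ≤ t * ‖x‖ ^ 2 := by positivity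
      linarith
    have h' : 0 < Z⁻¹ := by positivity
    simp only [hρ]
    nlinarith
  have ρm : Measurable (fun x => ENNReal.ofReal (ρ x)) := ρc.measurable.ennreal_ofReal
  let μ : Measure E := volume.withDensity (fun x => ENNReal.ofReal (ρ x))
  haveI : IsProbabilityMeasure μ := by
    constructor
    rw [withDensity_apply _ MeasurableSet.univ, Measure.restrict_univ,
      ← ofReal_integral_eq_lintegral_ofReal ρi (Eventually.of_forall ρ0), ρ1, ENNReal.ofReal_one]
  have hμ : ∀ g : E → ℝ, ∫ x, g x ∂μ = ∫ x, ρ x * g x := by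
    intro g
    rw [integral_withDensity_eq_integral_toReal_smul ρm (by simp)]
    refine integral_congr_ae (Eventually.of_forall fun x => ?_)
    simp only [ENNReal.toReal_ofReal (ρ0 x), smul_eq_mul]
  have kc2 : Continuous (fun p : E × E => k (p.1 - p.2)) := by fun_prop
  have h0 := psd_double_integral (fun x y => k (x - y)) kc2.measurable M (fun x y => hM _) hK μ
  rw [integral_prod _ (Integrable.mono' (integrable_const M) kc2.aestronglyMeasurable
        (Eventually.of_forall fun x => hM _)), hμ] at h0
  have h1 : ∀ x : E, ρ x * ∫ y, k (x - y) ∂μ = ∫ z, ρ x * ρ (x - z) * k z := by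
    intro x
    rw [hμ, ← integral_const_mul, ← integral_sub_left_eq_self _ volume x]
    refine integral_congr_ae (Eventually.of_forall fun x => ?_)
    simp only [sub_sub_cancel]
    ring
  simp only [h1] at h0
  have hint : Integrable (fun p : E × E => ρ p.1 * ρ (p.1 - p.2) * k p.2)
      ((volume : Measure E).prod volume) := by
    have hd := (ρi.mul_prod hki.norm).const_mul Z⁻¹
    refine Integrable.mono' hd (Continuous.aestronglyMeasurable (by fun_prop))
      (Eventually.of_forall fun p => ?_)
    rw [norm_mul, norm_mul, Real.norm_of_nonneg (ρ0 _), Real.norm_of_nonneg (ρ0 _)]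
    have := mul_le_mul_of_nonneg_right (ρb (p.1 - p.2)) (mul_nonneg (ρ0 p.1) (norm_nonneg (k p.2)))
    linarith
  rw [integral_integral_swap hint] at h0
  have h2 : ∀ z : E, ∫ x, ρ x * ρ (x - z) * k z
      = (Z⁻¹ ^ 2 * ∫ x : E, Real.exp (-(2 * t) * ‖x‖ ^ 2)) * (k z * Real.exp (-(t / 2) * ‖z‖ ^ 2)) := by
    intro z
    rw [← integral_add_right_eq_self _ ((2:ℝ)⁻¹ • z), ← integral_const_mul, ← integral_mul_const]
    refine integral_congr_ae (Eventually.of_forall fun x => ?_)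
    simp only [hρ]
    have e1 : x + (2:ℝ)⁻¹ • z - z = x - (2:ℝ)⁻¹ • z := by
      module
    have e2 := parallelogram_law_with_norm ℝ x ((2:ℝ)⁻¹ • z)
    have e3 : ‖(2:ℝ)⁻¹ • z‖ = 2⁻¹ * ‖z‖ := by rw [norm_smul]; norm_num
    rw [e1]
    have e4 : Real.exp (-t * ‖x + (2:ℝ)⁻¹ • z‖ ^ 2) * Real.exp (-t * ‖x - (2:ℝ)⁻¹ • z‖ ^ 2)
        = Real.exp (-(2 * t) * ‖x‖ ^ 2) * Real.exp (-(t / 2) * ‖z‖ ^ 2) := by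
      rw [← Real.exp_add, ← Real.exp_add]
      congr 1
      rw [e3] at e2
      linear_combination (-t) * e2
    linear_combination (Z⁻¹ ^ 2 * k z) * e4
  simp only [h2] at h0
  rw [integral_const_mul] at h0
  exact nonneg_of_mul_nonneg_right h0 (mul_pos (by positivity) (gpos _ (by positivity)))

lemma integral_nonneg_of_psd {d : ℕ} (k : EuclideanSpace ℝ (Fin d) → ℝ) (hk : Continuous k)
    (hki : Integrable k) (M : ℝ) (hM : ∀ x, |k x| ≤ M)
    (hK : IsPSDKernel (fun x y => ((k (x - y) : ℝ) : ℂ))) : 0 ≤ ∫ z, k z := by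
  have ht : Tendsto (fun n : ℕ => ∫ z, k z * Real.exp (-((1 / ((n : ℝ) + 1)) / 2) * ‖z‖ ^ 2)) atTop
      (𝓝 (∫ z, k z)) := by
    refine tendsto_integral_of_dominated_convergence (fun z => ‖k z‖)
      (fun n => Continuous.aestronglyMeasurable (by fun_prop)) hki.norm ?_ ?_
    · intro n
      refine Eventually.of_forall fun z => ?_
      rw [norm_mul, Real.norm_of_nonneg (Real.exp_pos _).le]
      refine mul_le_of_le_one_right (norm_nonneg _) ?_
      rw [Real.exp_le_one_iff, neg_mul, neg_nonpos]
      positivity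
    · refine Eventually.of_forall fun z => ?_
      have h1 : Tendsto (fun n : ℕ => 1 / ((n : ℝ) + 1)) atTop (𝓝 0) :=
        tendsto_one_div_add_atTop_nhds_zero_nat
      have hc : Continuous (fun s : ℝ => k z * Real.exp (-(s / 2) * ‖z‖ ^ 2)) := by fun_prop
      have := (hc.tendsto 0).comp h1
      simpa [Function.comp_def] using this
  exact ge_of_tendsto' ht fun n => gauss_avg k hk hki M hM hK _ (by positivity)

lemma lower_b (d : ℕ) (hd : 0 < d) (σ₁ σ₂ : ℝ) (hσ₁ : 0 < σ₁) (h₁₂ : σ₁ < σ₂) (lam : ℝ)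
    (h : IsPSDKernel (fun x y : EuclideanSpace ℝ (Fin d) =>
            (lam : ℂ) * l2expK d σ₁ x y - l2expK d σ₂ x y)) : (σ₂ / σ₁) ^ d ≤ lam := by
  have h2 : 0 < σ₂ := hσ₁.trans h₁₂
  obtain ⟨i1, e1⟩ := exp_norm_integrable d hd σ₁ hσ₁
  obtain ⟨i2, e2⟩ := exp_norm_integrable d hd σ₂ h2
  have b : ∀ σ : ℝ, 0 < σ → ∀ z : EuclideanSpace ℝ (Fin d), |Real.exp (-‖z‖ / σ)| ≤ 1 := by
    intro σ hσ z
    rw [abs_of_pos (Real.exp_pos _), Real.exp_le_one_iff, neg_div, neg_nonpos]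
    positivity
  have key := integral_nonneg_of_psd
    (fun z : EuclideanSpace ℝ (Fin d) => lam * Real.exp (-‖z‖ / σ₁) - Real.exp (-‖z‖ / σ₂))
    (by fun_prop) ((i1.const_mul lam).sub i2) (|lam| + 1)
    (fun z => by
      refine (abs_sub _ _).trans ?_
      rw [abs_mul]
      have := mul_le_mul_of_nonneg_left (b σ₁ hσ₁ z) (abs_nonneg lam)
      have := b σ₂ h2 z
      linarith)
    (by
      convert h using 3 with x y
      simp [l2expK])
  rw [integral_sub (i1.const_mul lam) i2, integral_const_mul, e1, e2] at key
  have hI : 0 < ∫ z : EuclideanSpace ℝ (Fin d), Real.exp (-‖z‖) := by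
    refine integral_exp_pos ?_
    have := (exp_norm_integrable d hd 1 one_pos).1
    simpa using this
  have : 0 ≤ (lam * σ₁ ^ d - σ₂ ^ d) * ∫ z : EuclideanSpace ℝ (Fin d), Real.exp (-‖z‖) := by
    linarith
  have := nonneg_of_mul_nonneg_left this hI
  rw [div_pow, div_le_iff₀ (by positivity)]
  linarith

lemma upper_a (d : ℕ) (σ₁ σ₂ : ℝ) (hσ₁ : 0 < σ₁) (h₁₂ : σ₁ < σ₂) :
    IsPSDKernel (fun x y : EuclideanSpace ℝ (Fin d) =>
        ((σ₂ / σ₁ : ℝ) : ℂ) * l2expK d σ₂ x y - l2expK d σ₁ x y) := by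
  have h2 : 0 < σ₂ := hσ₁.trans h₁₂
  have := psd_smul (psd_a d σ₁⁻¹ σ₂⁻¹ (by positivity) (by gcongr)) σ₁⁻¹ (by positivity)
  convert this using 3 with x y
  rw [l2expK, l2expK, ← Complex.ofReal_mul, ← Complex.ofReal_mul, ← Complex.ofReal_sub]
  congr 1
  rw [inv_inv, inv_inv, show -‖x - y‖ / σ₁ = -(σ₁⁻¹ * ‖x - y‖) by ring,
    show -‖x - y‖ / σ₂ = -(σ₂⁻¹ * ‖x - y‖) by ring]
  field_simp

lemma upper_b (d : ℕ) (σ₁ σ₂ : ℝ) (hσ₁ : 0 < σ₁) (h₁₂ : σ₁ < σ₂) :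
    IsPSDKernel (fun x y : EuclideanSpace ℝ (Fin d) =>
        (((σ₂ / σ₁) ^ d : ℝ) : ℂ) * l2expK d σ₁ x y - l2expK d σ₂ x y) := by
  have h2 : 0 < σ₂ := hσ₁.trans h₁₂
  have := psd_smul (psd_b d σ₁⁻¹ σ₂⁻¹ (by positivity) (by gcongr)) (σ₂ ^ d) (by positivity)
  convert this using 3 with x y
  rw [l2expK, l2expK, ← Complex.ofReal_mul, ← Complex.ofReal_mul, ← Complex.ofReal_sub]
  congr 1
  rw [show -‖x - y‖ / σ₁ = -(σ₁⁻¹ * ‖x - y‖) by ring,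
    show -‖x - y‖ / σ₂ = -(σ₂⁻¹ * ‖x - y‖) by ring, div_pow, inv_pow, inv_pow]
  have : σ₂ ^ d ≠ 0 := by positivity
  have : σ₁ ^ d ≠ 0 := by positivity
  field_simp

end Aux

/-- For `0 < σ₁ < σ₂`: `σ₂/σ₁` is the least `λ ≥ 0` making `λℰ_{σ₂} − ℰ_{σ₁}`
positive semidefinite, and `(σ₂/σ₁)^d` is the least `λ ≥ 0` making
`λℰ_{σ₁} − ℰ_{σ₂}` positive semidefinite (in particular both differences with
these constants are positive semidefinite kernels). -/
theorem l2exp_inclusion (d : ℕ) (hd : 0 < d) (σ₁ σ₂ : ℝ) (hσ₁ : 0 < σ₁) (h₁₂ : σ₁ < σ₂) :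
    (IsPSDKernel (fun x y : EuclideanSpace ℝ (Fin d) =>
        ((σ₂ / σ₁ : ℝ) : ℂ) * l2expK d σ₂ x y - l2expK d σ₁ x y) ∧
      IsLeast {lam : ℝ | 0 ≤ lam ∧
          IsPSDKernel (fun x y : EuclideanSpace ℝ (Fin d) =>
            (lam : ℂ) * l2expK d σ₂ x y - l2expK d σ₁ x y)}
        (σ₂ / σ₁)) ∧
    (IsPSDKernel (fun x y : EuclideanSpace ℝ (Fin d) =>
        (((σ₂ / σ₁) ^ d : ℝ) : ℂ) * l2expK d σ₁ x y - l2expK d σ₂ x y) ∧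
      IsLeast {lam : ℝ | 0 ≤ lam ∧
          IsPSDKernel (fun x y : EuclideanSpace ℝ (Fin d) =>
            (lam : ℂ) * l2expK d σ₁ x y - l2expK d σ₂ x y)}
        ((σ₂ / σ₁) ^ d)) := by
  have h2 : 0 < σ₂ := hσ₁.trans h₁₂
  refine ⟨⟨upper_a d σ₁ σ₂ hσ₁ h₁₂, ⟨by positivity, upper_a d σ₁ σ₂ hσ₁ h₁₂⟩, ?_⟩,
    ⟨upper_b d σ₁ σ₂ hσ₁ h₁₂, ⟨by positivity, upper_b d σ₁ σ₂ hσ₁ h₁₂⟩, ?_⟩⟩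
  · rintro lam ⟨-, h⟩
    exact lower_a d hd σ₁ σ₂ hσ₁ h₁₂ lam h
  · rintro lam ⟨-, h⟩
    exact lower_b d hd σ₁ σ₂ hσ₁ h₁₂ lam h
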